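/- Let p be an odd prime and s a positive integer with p^s ≡ 1 (mod 3), and let m = (p^s - 1)/3 or m = p^s - 1. Then, modulo p^{s+4}, sum_{k=0}^{m} (6k+1) (1/3)_k^6 / (k!)^6 ≡ ((2/3)_{(p^s-1)/3}^3 / (1)_{(p^s-1)/3}^3) * ( p^s + p^{3s} * sum_{j=1}^{(p^s-1)/3} ( 1/(3j-1)^2 - 1/(3j)^2 ) ). -/

import Mathlib

open Finset

/-- Rising factorial `(x)_k = x(x+1)⋯(x+k-1)`. -/
def poch (x : ℚ) (k : ℕ) : ℚ := ∏ i ∈ Finset.range k, (x + i)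

/-- `a ≡ b (mod p^m)`: the `p`-adic valuation of `a - b` is at least `m`. -/
def pcong (p : ℕ) (m : ℕ) (a b : ℚ) : Prop :=
  a = b ∨ (m : ℤ) ≤ padicValRat p (a - b)

/-- Generalized harmonic number `H_m^{(ℓ)} = ∑_{k=1}^m 1/k^ℓ`. -/
def harm (m ℓ : ℕ) : ℚ := ∑ k ∈ Finset.Icc 1 m, 1 / (k : ℚ) ^ ℓ

/-!
A Wilf–Zeilberger pair turns the `N`-th partial sum of `∑ (6k+1) (1/3)_k ^ 6 / k! ^ 6` into the
partial sum of a very-well-poised series with parameters `-1/3 - N` (three times) and `1/3` (three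
times). Put `q = p ^ s = 3n + 1` and `δ = q / 3`. Replacing two parameters `1/3` by `1/3 ± δ` for
`N = n`, or two parameters `-1/3 - N` by `-1/3 - N ± δ` for `N = 3n`, makes the series terminating
and balanced, so that Dougall's theorem evaluates it. The perturbation multiplies the `k`-th term by
`1 + O(δ²)`, because the contributions linear in `δ` cancel, and this is harmless where the term is
already divisible by `q p²`. The correction `q² ∑ (1/(3j-1)² - 1/(3j)²)` comes, for `N = n`, from
the second-order expansion of Dougall's value and, for `N = 3n`, from the single exceptional term
`k = n`.
-/

section RisingFactorial

variable (x : ℚ) (k m : ℕ)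

lemma poch_zero : poch x 0 = 1 := prod_range_zero _

lemma poch_succ : poch x (k + 1) = poch x k * (x + k) := prod_range_succ _ _

lemma poch_add : poch x (m + k) = poch x m * poch (x + m) k := by
  simp only [poch, prod_range_add, Nat.cast_add, add_assoc]

lemma poch_succ_left : poch x (k + 1) = x * poch (x + 1) k := by
  rw [add_comm k 1, poch_add, poch_succ, poch_zero, Nat.cast_zero, Nat.cast_one, add_zero, one_mul]

lemma poch_mul_add_eq : poch x k * (x + k) = x * poch (x + 1) k := by
  rw [← poch_succ, poch_succ_left]

lemma poch_reflect : poch x k = (-1) ^ k * poch (1 - x - k) k := by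
  have h : (-1) ^ k = ∏ _i ∈ range k, (-1 : ℚ) := by rw [prod_const, card_range]
  rw [poch, ← prod_range_reflect, poch, h, ← prod_mul_distrib]
  refine prod_congr rfl fun i hi ↦ ?_
  rw [Nat.sub_sub, Nat.cast_sub (by have := mem_range.mp hi; omega)]
  push_cast
  ring

lemma poch_one : poch 1 k = k.factorial := by
  induction k with
  | zero => simp [poch_zero]
  | succ k ih => rw [poch_succ, ih, Nat.factorial_succ]; push_cast; ring

lemma poch_neg_natCast_succ : poch (-k) (k + 1) = 0 := by rw [poch_succ, neg_add_cancel, mul_zero]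

variable {x k} in
lemma poch_ne_zero (h : ∀ i < k, x + i ≠ 0) : poch x k ≠ 0 :=
  prod_ne_zero_iff.mpr fun i hi ↦ h i (mem_range.mp hi)

end RisingFactorial

section Dougall

/-- The `k`-th term of the very-well-poised hypergeometric series `₇F₆` at `1` with leading
parameter `a` and further numerator parameters `b, c, d, e, f`. -/
def vwpTerm (a b c d e f : ℚ) (k : ℕ) : ℚ :=
  (a + 2 * k) / a * (poch a k * poch b k * poch c k * poch d k * poch e k * poch f k /
    (poch 1 k * poch (1 + a - b) k * poch (1 + a - c) k * poch (1 + a - d) k *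
      poch (1 + a - e) k * poch (1 + a - f) k))

/-- The value of the terminating series in Dougall's theorem. -/
def dougallValue (a b c d : ℚ) (n : ℕ) : ℚ :=
  poch (1 + a) n * poch (1 + a - b - c) n * poch (1 + a - b - d) n * poch (1 + a - c - d) n /
    (poch (1 + a - b) n * poch (1 + a - c) n * poch (1 + a - d) n * poch (1 + a - b - c - d) n)

/-- The hypergeometric part of the telescoping certificate for Dougall's theorem. -/
def dougallCert (a b c d e n : ℚ) (k : ℕ) : ℚ :=
  poch (a + 1) k * poch b (k + 1) * poch c (k + 1) * poch d (k + 1) * poch (e + 1) k *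
      poch (-n) k /
    (poch 1 k * poch (1 + a - b) k * poch (1 + a - c) k * poch (1 + a - d) k *
      poch (1 + a - e) k * poch (2 + a + n) k)

variable {a : ℚ} (b c d e n : ℚ) (k : ℕ)

lemma vwpTerm_succ (ha : a ≠ 0) :
    vwpTerm a b c d e (-n) (k + 1) = dougallCert a b c d e n k *
      ((a + 2 * (k + 1 : ℕ)) * e * (-n + k) / ((1 + k) * (1 + a - b + k) * (1 + a - c + k) *
        (1 + a - d + k) * (1 + a - e + k) * (1 + a + n))) := by
  have h₁ : 1 + a - -n = 1 + a + n := by ring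
  have h₂ : 1 + a + n + 1 = 2 + a + n := by ring
  rw [vwpTerm, dougallCert, h₁, poch_succ_left a, poch_succ_left e, poch_succ_left (1 + a + n), h₂,
    div_mul_div_comm, div_mul_div_comm, eq_comm, ← mul_div_mul_left _ _ ha]
  simp only [poch_succ]
  congr 1 <;> ac_rfl

lemma vwpTerm_add_one_succ (ha : a ≠ 0) :
    vwpTerm a b c d (e + 1) (-(n + 1)) (k + 1) = dougallCert a b c d e n k *
      ((a + 2 * (k + 1 : ℕ)) * (e + 1 + k) * (-(n + 1)) /
        ((1 + k) * (1 + a - b + k) * (1 + a - c + k) * (1 + a - d + k) * (a - e) *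
          (2 + a + n + k))) := by
  have h₁ : 1 + a - -(n + 1) = 2 + a + n := by ring
  have h₂ : 1 + a - (e + 1) = a - e := by ring
  have h₃ : a - e + 1 = 1 + a - e := by ring
  have h₄ : -(n + 1) + 1 = -n := by ring
  rw [vwpTerm, dougallCert, h₁, h₂, poch_succ_left a, poch_succ_left (a - e),
    poch_succ_left (-(n + 1)), h₃, h₄, div_mul_div_comm, div_mul_div_comm,
    eq_comm, ← mul_div_mul_left _ _ ha]
  simp only [poch_succ]
  congr 1 <;> ac_rfl

lemma dougallCert_succ :
    dougallCert a b c d e n (k + 1) = dougallCert a b c d e n k *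
      ((a + 1 + k) * (b + (k + 1 : ℕ)) * (c + (k + 1 : ℕ)) * (d + (k + 1 : ℕ)) * (e + 1 + k) *
          (-n + k) /
        ((1 + k) * (1 + a - b + k) * (1 + a - c + k) * (1 + a - d + k) * (1 + a - e + k) *
          (2 + a + n + k))) := by
  rw [dougallCert, dougallCert, div_mul_div_comm]
  simp only [poch_succ]
  congr 1 <;> ac_rfl

/-- The ratio of consecutive values of `dougallValue` as a function of `n`. -/
def dougallRatio (a b c d n : ℚ) : ℚ :=
  (1 + a + n) * (1 + a - b - c + n) * (1 + a - b - d + n) * (1 + a - c - d + n) /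
    ((1 + a - b + n) * (1 + a - c + n) * (1 + a - d + n) * (1 + a - b - c - d + n))

variable {b c d e n k}

lemma quartic_expand (α β γ δ x : ℚ) :
    (x + α) * (x + β) * (x + γ) * (x + δ) = x ^ 4 + (α + β + γ + δ) * x ^ 3 +
      (α * β + α * γ + α * δ + β * γ + β * δ + γ * δ) * x ^ 2 +
      (α * β * γ + α * β * δ + α * γ * δ + β * γ * δ) * x + α * β * γ * δ := by
  ring

lemma dougall_quartic_identity {k : ℚ} (he : e = 1 + 2 * a - b - c - d + n) :
    (a + 2 * (k + 1)) * ((e + 1 + k) * ((n + 1) * (1 + a - b + n) * (1 + a - c + n) *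
          (1 + a - d + n)) * (1 + a - e + k) -
        e * (1 + a - b - c + n) * (1 + a - b - d + n) * (1 + a - c - d + n) * (-n + k) *
          (2 + a + n + k)) =
      -(e + n + 1) * ((a + 1 + k) * (b + (k + 1)) * (c + (k + 1)) * (d + (k + 1)) *
          (e + 1 + k) * (-n + k) -
        (1 + k) * (1 + a - b + k) * (1 + a - c + k) * (1 + a - d + k) * (1 + a - e + k) *
          (2 + a + n + k)) := by
  -- The four products of four factors are values of one quartic `Q`; the identity depends only on
  -- its two leading coefficients.
  let Q (x : ℚ) := (x + a / 2) * (x + (b - a / 2)) * (x + (c - a / 2)) * (x + (d - a / 2))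
  have h₁ : (a + 1 + k) * (b + (k + 1)) * (c + (k + 1)) * (d + (k + 1)) = Q (k + 1 + a / 2) := by
    simp only [Q]; ring
  have h₂ : (1 + k) * (1 + a - b + k) * (1 + a - c + k) * (1 + a - d + k) =
      Q (-(k + 1 + a / 2)) := by simp only [Q]; ring
  have h₃ : (n + 1) * (1 + a - b + n) * (1 + a - c + n) * (1 + a - d + n) =
      Q (-(n + 1 + a / 2)) := by simp only [Q]; ring
  have h₄ : e * (1 + a - b - c + n) * (1 + a - b - d + n) * (1 + a - c - d + n) =
      Q (e - a / 2) := by simp only [Q, he]; ring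
  obtain ⟨s₂, s₃, s₄, hQ⟩ : ∃ s₂ s₃ s₄, ∀ x,
      Q x = x ^ 4 + (1 + a + n - e) * x ^ 3 + s₂ * x ^ 2 + s₃ * x + s₄ :=
    have hsum : a / 2 + (b - a / 2) + (c - a / 2) + (d - a / 2) = 1 + a + n - e := by rw [he]; ring
    ⟨_, _, _, hsum ▸ quartic_expand _ _ _ _⟩
  rw [h₁, h₂, h₃, h₄, hQ, hQ, hQ, hQ]
  ring

lemma vwpTerm_sub_dougallRatio_mul (ha : a ≠ 0) (he : e = 1 + 2 * a - b - c - d + n)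
    (hk : 1 + a - e + k = 0 → k = n) (hb : 1 + a - b + k ≠ 0) (hc : 1 + a - c + k ≠ 0)
    (hd : 1 + a - d + k ≠ 0) (han : 1 + a + n ≠ 0) (hk' : 2 + a + n + k ≠ 0)
    (hbn : 1 + a - b + n ≠ 0) (hcn : 1 + a - c + n ≠ 0) (hdn : 1 + a - d + n ≠ 0)
    (hen : 1 + a - b - c - d + n ≠ 0) :
    vwpTerm a b c d (e + 1) (-(n + 1)) (k + 1) -
        dougallRatio a b c d n * vwpTerm a b c d e (-n) (k + 1) =
      -(e + n + 1) / ((1 + a - b + n) * (1 + a - c + n) * (1 + a - d + n) *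
        (1 + a - b - c - d + n)) *
          (dougallCert a b c d e n (k + 1) - dougallCert a b c d e n k) := by
  have hae : a - e = -(1 + a - b - c - d + n) := by rw [he]; ring
  have hk1 : (1 : ℚ) + k ≠ 0 := by positivity
  rw [vwpTerm_add_one_succ _ _ _ _ _ _ ha, vwpTerm_succ _ _ _ _ _ _ ha, dougallCert_succ, hae,
    dougallRatio]
  generalize dougallCert a b c d e n k = P
  push_cast
  generalize (k : ℚ) = k at *
  by_cases hY : 1 + a - e + k = 0
  · obtain rfl := hk hY
    rw [neg_add_cancel]
    field_simp
    ring
  · have key := dougall_quartic_identity he (k := k)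
    generalize 1 + k = K, 1 + a - b + k = B, 1 + a - c + k = C, 1 + a - d + k = D,
      1 + a - e + k = E, 2 + a + n + k = N, 1 + a - b + n = B', 1 + a - c + n = C',
      1 + a - d + n = D', 1 + a - b - c - d + n = X, 1 + a - b - c + n = R,
      1 + a - b - d + n = S, 1 + a - c - d + n = T, -n + k = V, e + 1 + k = W,
      a + 2 * (k + 1) = A at *
    field_simp
    linear_combination P * key

lemma dougallValue_succ (a b c d : ℚ) (n : ℕ) :
    dougallValue a b c d (n + 1) = dougallRatio a b c d n * dougallValue a b c d n := by
  rw [dougallRatio, dougallValue, dougallValue, div_mul_div_comm]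
  simp only [poch_succ]
  congr 1 <;> ac_rfl

lemma sum_range_vwpTerm_sub_dougallRatio_mul {n K : ℕ} (hK : K ≤ n + 1) (ha : a ≠ 0)
    (ha' : ∀ j < 2 * n + 2, 1 + a + j ≠ 0) (hb : ∀ j < n + 1, 1 + a - b + j ≠ 0)
    (hc : ∀ j < n + 1, 1 + a - c + j ≠ 0) (hd : ∀ j < n + 1, 1 + a - d + j ≠ 0)
    (hbcd : ∀ j < n + 1, 1 + a - b - c - d + j ≠ 0) (he : e = 1 + 2 * a - b - c - d + n) :
    ∑ k ∈ range (K + 1), (vwpTerm a b c d (e + 1) (-(n + 1)) k -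
        dougallRatio a b c d n * vwpTerm a b c d e (-n) k) =
      -(e + n + 1) / ((1 + a - b + n) * (1 + a - c + n) * (1 + a - d + n) *
        (1 + a - b - c - d + n)) * dougallCert a b c d e n K := by
  have hn := Nat.lt_succ_self n
  have hbn := hb n hn
  have hcn := hc n hn
  have hdn := hd n hn
  have hbcdn := hbcd n hn
  induction K with
  | zero =>
    simp only [zero_add, sum_range_one, vwpTerm, dougallCert, dougallRatio, poch_zero, poch_succ]
    field_simp
    rw [he]
    ring
  | succ k ih =>
    rw [sum_range_succ, ih (by omega), vwpTerm_sub_dougallRatio_mul ha he _ (hb k hK) (hc k hK)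
      (hd k hK) (ha' n (by omega)) _ hbn hcn hdn hbcdn, mul_sub, add_sub_cancel]
    · intro h
      by_contra hkn
      have hlt : k < n := lt_of_le_of_ne (by omega) (mod_cast hkn)
      refine hbcd (n - k - 1) (by omega) ?_
      rw [Nat.sub_sub, Nat.cast_sub hlt]
      push_cast
      linarith
    · convert ha' (n + 1 + k) (by omega) using 1
      push_cast
      ring

theorem dougall {n : ℕ} (ha : a ≠ 0) (ha' : ∀ j < 2 * n, 1 + a + j ≠ 0)
    (hb : ∀ j < n, 1 + a - b + j ≠ 0) (hc : ∀ j < n, 1 + a - c + j ≠ 0)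
    (hd : ∀ j < n, 1 + a - d + j ≠ 0) (hbcd : ∀ j < n, 1 + a - b - c - d + j ≠ 0) :
    ∑ k ∈ range (n + 1), vwpTerm a b c d (1 + 2 * a - b - c - d + n) (-n) k =
      dougallValue a b c d n := by
  induction n with
  | zero => simp [vwpTerm, dougallValue, poch_zero, ha]
  | succ n ih =>
    have hsum := sum_range_vwpTerm_sub_dougallRatio_mul (e := 1 + 2 * a - b - c - d + n) le_rfl
      ha ha' hb hc hd hbcd rfl
    have hcert : dougallCert a b c d (1 + 2 * a - b - c - d + n) n (n + 1) = 0 := by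
      simp only [dougallCert, poch_neg_natCast_succ, mul_zero, zero_div]
    have hlast : vwpTerm a b c d (1 + 2 * a - b - c - d + n) (-n) (n + 1) = 0 := by
      simp only [vwpTerm, poch_neg_natCast_succ, mul_zero, zero_div]
    rw [hcert, mul_zero, sum_sub_distrib, sub_eq_zero, ← mul_sum, sum_range_succ _ (n + 1),
      sum_range_succ _ (n + 1), hlast, add_zero,
      ih (fun j hj ↦ ha' j (by omega)) (fun j hj ↦ hb j (by omega)) (fun j hj ↦ hc j (by omega))
        (fun j hj ↦ hd j (by omega)) (fun j hj ↦ hbcd j (by omega)), ← dougallValue_succ] at hsum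
    rw [← hsum, sum_range_succ _ (n + 1)]
    push_cast
    simp only [add_assoc]

end Dougall

section Perturbation

/-- The effect `(x - δ)_k (x + δ)_k / (x)_k ^ 2` of splitting the two factors of `(x)_k ^ 2`
symmetrically. -/
def pochSplit (x δ : ℚ) (k : ℕ) : ℚ := poch (x - δ) k * poch (x + δ) k / poch x k ^ 2

variable {a e : ℚ} {k : ℕ} (b c d δ : ℚ)

lemma vwpTerm_split (he : poch e k ≠ 0) (hae : poch (1 + a - e) k ≠ 0) :
    vwpTerm a b c d (e + δ) (e - δ) k =
      vwpTerm a b c d e e k * (pochSplit e δ k / pochSplit (1 + a - e) δ k) := by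
  have h₁ : 1 + a - (e + δ) = 1 + a - e - δ := by ring
  have h₂ : 1 + a - (e - δ) = 1 + a - e + δ := by ring
  rw [vwpTerm, vwpTerm, pochSplit, pochSplit, h₁, h₂, mul_assoc (_ / a),
    div_div_div_eq]
  congr 1
  rw [div_mul_div_comm,
    ← mul_div_mul_right _ _ (mul_ne_zero (pow_ne_zero 2 he) (pow_ne_zero 2 hae)), sq, sq]
  congr 1 <;> ac_rfl

lemma vwpTerm_swap (a e f : ℚ) (k : ℕ) : vwpTerm a b c d e f k = vwpTerm a d e f b c k := by
  rw [vwpTerm, vwpTerm]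
  congr 2 <;> ac_rfl

end Perturbation

section Transformation

/-- The cube root of the hypergeometric part of `wzTerm`. -/
def wzBase (N k : ℕ) : ℚ :=
  poch (2 / 3) N / poch 1 N *
    (poch (-1 / 3 - N) k * poch (1 / 3) k / (poch 1 k * poch (1 / 3 - N) k))

/-- The summand of a very-well-poised series, depending on `N`, whose `N`-th partial sum agrees
with that of `∑ (6k+1) (1/3)_k ^ 6 / k! ^ 6`. -/
def wzTerm (N k : ℕ) : ℚ := (3 * N + 1 - 6 * k) * wzBase N k ^ 3

/-- The Wilf–Zeilberger mate of `wzTerm`. -/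
def wzMate (N k : ℕ) : ℚ := (6 * N + 8 - 3 * k) * (3 * k / (3 * N + 4) * wzBase (N + 1) k) ^ 3

variable (N k : ℕ)

lemma wzTerm_eq_vwpTerm : wzTerm N k = (3 * N + 1) * (poch (2 / 3) N / poch 1 N) ^ 3 *
    vwpTerm (-1 / 3 - N) (-1 / 3 - N) (-1 / 3 - N) (1 / 3) (1 / 3) (1 / 3) k := by
  have h₁ : (1 : ℚ) + (-1 / 3 - N) - (-1 / 3 - N) = 1 := by ring
  have h₂ : (1 : ℚ) + (-1 / 3 - N) - 1 / 3 = 1 / 3 - N := by ring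
  have h₃ : (-1 / 3 - N + 2 * k : ℚ) / (-1 / 3 - N) = (3 * N + 1 - 6 * k) / (3 * N + 1) := by
    rw [div_eq_div_iff (by linarith [N.cast_nonneg (α := ℚ)]) (by positivity)]
    ring
  have hN : (3 * N + 1 : ℚ) ≠ 0 := by positivity
  rw [wzTerm, wzBase, vwpTerm, h₁, h₂, h₃]
  field_simp

lemma three_mul_sub_add_ne_zero {r : ℤ} (hr : ¬ 3 ∣ r) : (3 * N + r - 3 * k : ℚ) ≠ 0 := by
  have h : 3 * (N : ℤ) + r - 3 * k ≠ 0 := by omega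
  exact_mod_cast h

lemma wzBase_succ_left : wzBase (N + 1) k =
    wzBase N k * ((3 * N + 4) * (3 * N + 2 - 3 * k) / ((3 * N + 3) * (3 * N + 4 - 3 * k))) := by
  have hu : (3 * N + 4 - 3 * k : ℚ) ≠ 0 := mod_cast three_mul_sub_add_ne_zero N k (r := 4) (by simp)
  have hv : (3 * N + 2 - 3 * k : ℚ) ≠ 0 := mod_cast three_mul_sub_add_ne_zero N k (r := 2) (by simp)
  have h₁ : poch (-1 / 3 - (N + 1 : ℕ)) k =
      poch (-1 / 3 - N) k * ((3 * N + 4) / (3 * N + 4 - 3 * k)) := by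
    have h := poch_mul_add_eq (-1 / 3 - (N + 1 : ℕ)) k
    rw [show (-1 / 3 - (N + 1 : ℕ) + 1 : ℚ) = -1 / 3 - N by push_cast; ring] at h
    push_cast at h ⊢
    rw [mul_div_assoc', eq_div_iff hu]
    linear_combination -3 * h
  have h₂ : poch (1 / 3 - (N + 1 : ℕ)) k =
      poch (1 / 3 - N) k * ((3 * N + 2) / (3 * N + 2 - 3 * k)) := by
    have h := poch_mul_add_eq (1 / 3 - (N + 1 : ℕ)) k
    rw [show (1 / 3 - (N + 1 : ℕ) + 1 : ℚ) = 1 / 3 - N by push_cast; ring] at h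
    push_cast at h ⊢
    rw [mul_div_assoc', eq_div_iff hv]
    linear_combination -3 * h
  have hN : (3 * N + 2 : ℚ) ≠ 0 := by positivity
  rw [wzBase, wzBase, h₁, h₂, poch_succ, poch_succ]
  field_simp
  ring

lemma wzBase_succ_right : wzBase N (k + 1) =
    wzBase N k * ((3 * N + 1 - 3 * k) * (3 * k + 1) / ((3 * k + 3) * (3 * N - 1 - 3 * k))) := by
  have h : (3 * N + 1 - 3 * k) * (3 * k + 1) / ((3 * k + 3) * (3 * N - 1 - 3 * k)) =
      (-1 / 3 - N + k) * (1 / 3 + k) / ((1 + k) * (1 / 3 - N + k) : ℚ) := by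
    rw [← mul_div_mul_left (_ * _) ((1 + k : ℚ) * _) (by simp : (9 : ℚ) ≠ 0), ← neg_div_neg_eq]
    congr 1 <;> ring
  rw [wzBase, wzBase, h, mul_assoc, div_mul_div_comm (_ * _)]
  simp only [poch_succ]
  congr 2 <;> ac_rfl

lemma wzTerm_succ_sub :
    wzTerm (N + 1) k - wzTerm N k = wzMate N (k + 1) - wzMate N k := by
  have hu : (3 * N + 4 - 3 * k : ℚ) ≠ 0 := mod_cast three_mul_sub_add_ne_zero N k (r := 4) (by simp)
  have hv : (3 * N + 2 - 3 * k : ℚ) ≠ 0 := mod_cast three_mul_sub_add_ne_zero N k (r := 2) (by simp)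
  have hN : (3 * N + 4 : ℚ) ≠ 0 := by positivity
  simp only [wzTerm, wzMate, wzBase_succ_right, wzBase_succ_left]
  push_cast
  have h₁ : 3 * ((N : ℚ) + 1) + 1 - 3 * k = 3 * N + 4 - 3 * k := by ring
  have h₂ : 3 * ((N : ℚ) + 1) - 1 - 3 * k = 3 * N + 2 - 3 * k := by ring
  rw [h₁, h₂]
  field_simp
  ring

lemma wzBase_self : wzBase N N = (poch (1 / 3) N / poch 1 N) ^ 2 * (3 * N + 1) := by
  have h₂ : poch (2 / 3) N ≠ 0 := poch_ne_zero fun i _ ↦ by positivity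
  have h : poch (4 / 3) N = poch (1 / 3) N * (3 * N + 1) := by
    have := poch_mul_add_eq (1 / 3) N
    norm_num at this
    linarith
  have e₁ : (1 - (-1 / 3 - N) - N : ℚ) = 4 / 3 := by ring
  have e₂ : (1 - (1 / 3 - N) - N : ℚ) = 2 / 3 := by ring
  rw [wzBase, poch_reflect (-1 / 3 - N), poch_reflect (1 / 3 - N), e₁, e₂, h]
  field_simp

lemma wzMate_add_wzTerm_succ :
    wzMate N (N + 1) + wzTerm (N + 1) (N + 1) =
      (6 * (N + 1) + 1) * (poch (1 / 3) (N + 1) / poch 1 (N + 1)) ^ 6 := by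
  rw [wzMate, wzTerm, wzBase_self]
  push_cast
  field_simp
  ring

theorem sum_range_wzTerm :
    ∑ k ∈ range (N + 1), wzTerm N k =
      ∑ k ∈ range (N + 1), (6 * k + 1) * (poch (1 / 3) k / poch 1 k) ^ 6 := by
  induction N with
  | zero => simp [wzTerm, wzBase, poch_zero]
  | succ N ih =>
    have h := sum_range_sub (wzMate N) (N + 1)
    have h₀ : wzMate N 0 = 0 := by simp [wzMate]
    simp only [← wzTerm_succ_sub, sum_sub_distrib, h₀, sub_zero] at h
    rw [sum_range_succ, sum_range_succ _ (N + 1), ← ih, Nat.cast_add_one, ← wzMate_add_wzTerm_succ,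
      ← h]
    ring

end Transformation

section PadicBall

lemma ne_zero_of_padicNorm_eq_one {p : ℕ} {u : ℚ} (hu : padicNorm p u = 1) : u ≠ 0 := by
  rintro rfl
  exact zero_ne_one (padicNorm.zero.symm.trans hu)

/-- The rational numbers whose `p`-adic valuation is at least `r`. -/
def padicBall (p : ℕ) [Fact p.Prime] (r : ℕ) : AddSubgroup ℚ where
  carrier := {x | padicNorm p x ≤ ((p : ℚ) ^ r)⁻¹}
  zero_mem' := by simp
  add_mem' hx hy := padicNorm.nonarchimedean.trans (max_le hx hy)
  neg_mem' hx := (padicNorm.neg _).trans_le hx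

variable {p : ℕ} [Fact p.Prime] {r t : ℕ} {x y u : ℚ}

lemma mem_padicBall : x ∈ padicBall p r ↔ padicNorm p x ≤ ((p : ℚ) ^ r)⁻¹ := Iff.rfl

lemma mem_padicBall_zero : x ∈ padicBall p 0 ↔ padicNorm p x ≤ 1 := by
  rw [mem_padicBall, pow_zero, inv_one]

lemma mem_padicBall_of_le (h : r ≤ t) (hx : x ∈ padicBall p t) : x ∈ padicBall p r := by
  have hp : (1 : ℚ) ≤ p := mod_cast (Fact.out : p.Prime).one_le
  exact hx.trans (inv_anti₀ (by positivity) (pow_le_pow_right₀ hp h))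

lemma mem_padicBall_iff_le_padicValRat (hx : x ≠ 0) : x ∈ padicBall p r ↔ r ≤ padicValRat p x := by
  rw [mem_padicBall, padicNorm.eq_zpow_of_nonzero hx, ← zpow_natCast, ← zpow_neg,
    zpow_le_zpow_iff_right₀ (mod_cast (Fact.out : p.Prime).one_lt), neg_le_neg_iff]

lemma pcong_of_sub_mem_padicBall (h : x - y ∈ padicBall p r) : pcong p r x y := by
  obtain hxy | hxy := eq_or_ne (x - y) 0
  · exact .inl (sub_eq_zero.mp hxy)
  · exact .inr ((mem_padicBall_iff_le_padicValRat hxy).mp h)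

lemma mul_mem_padicBall (hx : x ∈ padicBall p r) (hy : y ∈ padicBall p t) :
    x * y ∈ padicBall p (r + t) := by
  rw [mem_padicBall, padicNorm.mul, pow_add, mul_inv]
  exact mul_le_mul hx hy (padicNorm.nonneg _) (by positivity)

lemma mul_mem_padicBall_left (hx : x ∈ padicBall p 0) (hy : y ∈ padicBall p r) :
    x * y ∈ padicBall p r := zero_add r ▸ mul_mem_padicBall hx hy

lemma mul_mem_padicBall_right (hx : x ∈ padicBall p r) (hy : y ∈ padicBall p 0) :
    x * y ∈ padicBall p r := add_zero r ▸ mul_mem_padicBall hx hy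

lemma pow_mem_padicBall (hx : x ∈ padicBall p r) (k : ℕ) : x ^ k ∈ padicBall p (k * r) := by
  rw [mem_padicBall, IsAbsoluteValue.abv_pow (padicNorm p), pow_mul', ← inv_pow]
  exact pow_le_pow_left₀ (padicNorm.nonneg _) hx k

lemma intCast_mem_padicBall (z : ℤ) : (z : ℚ) ∈ padicBall p 0 :=
  mem_padicBall_zero.mpr (padicNorm.of_int z)

lemma prime_pow_mem_padicBall (p : ℕ) [Fact p.Prime] (s : ℕ) : (p : ℚ) ^ s ∈ padicBall p s := by
  rw [mem_padicBall, IsAbsoluteValue.abv_pow (padicNorm p), padicNorm.padicNorm_p_of_prime, inv_pow]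

lemma div_mem_padicBall (hx : x ∈ padicBall p r) (hu : padicNorm p u = 1) :
    x / u ∈ padicBall p r := by
  rwa [mem_padicBall, padicNorm.div, hu, div_one]

lemma padicNorm_eq_one_of_sub_mem (hu : u - 1 ∈ padicBall p 1) : padicNorm p u = 1 := by
  have hlt : padicNorm p (u - 1) < padicNorm p 1 := by
    rw [padicNorm.one]
    refine hu.trans_lt (inv_lt_one_of_one_lt₀ ?_)
    rw [pow_one]
    exact_mod_cast (Fact.out : p.Prime).one_lt
  rw [← sub_add_cancel u 1, padicNorm.add_eq_max_of_ne hlt.ne, max_eq_right hlt.le, padicNorm.one]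

lemma intCast_div_three_mem_padicBall (hp : ¬ p ∣ 3) (z : ℤ) : (z / 3 : ℚ) ∈ padicBall p 0 :=
  div_mem_padicBall (intCast_mem_padicBall z) (mod_cast (padicNorm.nat_eq_one_iff 3).mpr hp)

lemma div_intCast_mem_padicBall {s : ℕ} {z : ℤ} (hx : x ∈ padicBall p s)
    (hz : ¬ (p ^ s : ℤ) ∣ z) : x / z ∈ padicBall p 1 := by
  obtain rfl | hx₀ := eq_or_ne x 0
  · simp only [zero_div, zero_mem]
  have hz₀ : z ≠ 0 := fun h ↦ hz (h ▸ dvd_zero _)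
  have hval : padicValInt p z < s := by
    contrapose! hz
    exact (pow_dvd_pow _ hz).trans (padicValInt_dvd z)
  rw [mem_padicBall_iff_le_padicValRat hx₀] at hx
  rw [mem_padicBall_iff_le_padicValRat (div_ne_zero hx₀ (mod_cast hz₀)),
    padicValRat.div hx₀ (mod_cast hz₀), padicValRat.of_int]
  omega

end PadicBall

section Multichoose

lemma poch_div_poch_one (x : ℚ) (k : ℕ) : poch x k / poch 1 k = Ring.multichoose x k := by
  have h : poch x k = (ascPochhammer ℚ k).eval x := by
    induction k with
    | zero => simp [poch_zero]
    | succ k ih => rw [poch_succ, ascPochhammer_succ_eval, ih]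
  rw [poch_one, div_eq_iff (mod_cast k.factorial_ne_zero), h,
    ← Polynomial.ascPochhammer_smeval_eq_eval, ← Ring.factorial_nsmul_multichoose_eq_ascPochhammer,
    nsmul_eq_mul, mul_comm]

lemma multichoose_succ_eq (x : ℚ) (k : ℕ) :
    Ring.multichoose x (k + 1) = x / (k + 1 : ℕ) * Ring.multichoose (x + 1) k := by
  rw [← poch_div_poch_one, ← poch_div_poch_one, poch_succ_left, poch_one, poch_one,
    Nat.factorial_succ, Nat.cast_mul, div_mul_div_comm]

variable {p : ℕ} [Fact p.Prime] {x : ℚ}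

lemma multichoose_mem_padicBall (hx : x ∈ padicBall p 0) (k : ℕ) :
    Ring.multichoose x k ∈ padicBall p 0 := by
  have norm_le_one {y : ℚ} : y ∈ padicBall p 0 ↔ ‖(y : ℚ_[p])‖ ≤ 1 := by
    rw [mem_padicBall_zero, Padic.eq_padicNorm]
    norm_cast
  rw [norm_le_one] at hx ⊢
  have h : Ring.multichoose (x : ℚ_[p]) k = PadicInt.Coe.ringHom (Ring.multichoose ⟨x, hx⟩ k) :=
    (Ring.map_multichoose PadicInt.Coe.ringHom ⟨x, hx⟩ k).symm
  rw [← Rat.coe_castHom, Ring.map_multichoose, Rat.coe_castHom, h]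
  exact PadicInt.norm_le_one _

lemma multichoose_mem_padicBall_one {s k : ℕ} (hx : x ∈ padicBall p s) (hk₀ : 0 < k)
    (hk : k < p ^ s) : Ring.multichoose x k ∈ padicBall p 1 := by
  obtain ⟨k, rfl⟩ := Nat.exists_eq_add_one.mpr hk₀
  have hdvd : ¬ (p ^ s : ℤ) ∣ (k + 1 : ℕ) := mod_cast Nat.not_dvd_of_pos_of_lt hk₀ hk
  have h1 : x + 1 ∈ padicBall p 0 :=
    add_mem (mem_padicBall_of_le s.zero_le hx) (mod_cast intCast_mem_padicBall 1)
  rw [multichoose_succ_eq]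
  exact mul_mem_padicBall_right (div_intCast_mem_padicBall hx hdvd) (multichoose_mem_padicBall h1 k)

lemma multichoose_sub_natCast_mem_padicBall_one {s m k : ℕ} (hx : x ∈ padicBall p s) (hm : m < k)
    (hk : k < p ^ s) : Ring.multichoose (x - m) k ∈ padicBall p 1 := by
  induction m generalizing k with
  | zero => simpa using multichoose_mem_padicBall_one hx hm hk
  | succ m ih =>
    obtain ⟨k, rfl⟩ := Nat.exists_eq_add_one.mpr (Nat.zero_lt_of_lt hm)
    have h := Ring.multichoose_succ_succ (x - (m + 1 : ℕ)) k
    rw [Nat.cast_succ, sub_add_eq_sub_sub, sub_add_cancel] at h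
    rw [Nat.cast_succ, sub_add_eq_sub_sub, eq_sub_of_add_eq h.symm]
    exact sub_mem (ih (by omega) hk) (ih (by omega) (by omega))

end Multichoose

section FirstOrder

/-- `u` agrees with `1 + a` up to an error of twice the order of the small quantity `a`. -/
def IsFirstOrder (p : ℕ) [Fact p.Prime] (r : ℕ) (u a : ℚ) : Prop :=
  a ∈ padicBall p r ∧ u - (1 + a) ∈ padicBall p (2 * r)

namespace IsFirstOrder

variable {p : ℕ} [Fact p.Prime] {r : ℕ} {u v a b : ℚ}

lemma one_add (ha : a ∈ padicBall p r) : IsFirstOrder p r (1 + a) a :=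
  ⟨ha, by simp only [sub_self, zero_mem]⟩

lemma sub_one_mem (h : IsFirstOrder p r u a) : u - 1 ∈ padicBall p r := by
  rw [show u - 1 = u - (1 + a) + a by ring]
  exact add_mem (mem_padicBall_of_le (by omega) h.2) h.1

lemma padicNorm_eq_one (hr : 0 < r) (h : IsFirstOrder p r u a) : padicNorm p u = 1 :=
  padicNorm_eq_one_of_sub_mem (mem_padicBall_of_le hr h.sub_one_mem)

lemma one_add_mem (ha : a ∈ padicBall p r) : 1 + a ∈ padicBall p 0 :=
  add_mem (mod_cast intCast_mem_padicBall 1) (mem_padicBall_of_le r.zero_le ha)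

lemma mem_padicBall_zero (h : IsFirstOrder p r u a) : u ∈ padicBall p 0 := by
  rw [← add_sub_cancel 1 u]
  exact one_add_mem h.sub_one_mem

lemma mul (hu : IsFirstOrder p r u a) (hv : IsFirstOrder p r v b) :
    IsFirstOrder p r (u * v) (a + b) := by
  refine ⟨add_mem hu.1 hv.1, ?_⟩
  rw [show u * v - (1 + (a + b)) = (u - (1 + a)) * v + (1 + a) * (v - (1 + b)) + a * b by ring]
  exact add_mem (add_mem (mul_mem_padicBall_right hu.2 hv.mem_padicBall_zero)
    (mul_mem_padicBall_left (one_add_mem hu.1) hv.2)) (two_mul r ▸ mul_mem_padicBall hu.1 hv.1)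

lemma div (hr : 0 < r) (hu : IsFirstOrder p r u a) (hv : IsFirstOrder p r v b) :
    IsFirstOrder p r (u / v) (a - b) := by
  have hab := sub_mem hu.1 hv.1
  have hv1 := hv.padicNorm_eq_one hr
  have hv0 : v ≠ 0 := ne_zero_of_padicNorm_eq_one hv1
  refine ⟨hab, ?_⟩
  have h : u / v - (1 + (a - b)) =
      (u - (1 + a) - (v - (1 + b)) * (1 + (a - b)) - b * (a - b)) / v := by
    field_simp
    ring
  rw [h]
  exact div_mem_padicBall (sub_mem (sub_mem hu.2 (mul_mem_padicBall_right hv.2 (one_add_mem hab)))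
    (two_mul r ▸ mul_mem_padicBall hv.1 hab)) hv1

lemma prod {k : ℕ} {f : ℕ → ℚ} (hf : ∀ i < k, f i ∈ padicBall p r) :
    IsFirstOrder p r (∏ i ∈ range k, (1 + f i)) (∑ i ∈ range k, f i) := by
  induction k with
  | zero => simpa using one_add (zero_mem (padicBall p r))
  | succ k ih =>
    rw [prod_range_succ, sum_range_succ]
    exact (ih fun i hi ↦ hf i (hi.trans k.lt_succ_self)).mul (one_add (hf k k.lt_succ_self))

end IsFirstOrder

/-- Passing from `x` to `x + δ` changes every factor of `(x)_k` by a factor `1 + O(p ^ r)`. -/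
def IsPerturbable (p : ℕ) [Fact p.Prime] (r : ℕ) (δ x : ℚ) (k : ℕ) : Prop :=
  ∀ i < k, x + i ≠ 0 ∧ δ / (x + i) ∈ padicBall p r

namespace IsPerturbable

variable {p : ℕ} [Fact p.Prime] {r k m : ℕ} {x δ : ℚ}

lemma mono (h : IsPerturbable p r δ x k) (hm : m ≤ k) : IsPerturbable p r δ x m :=
  fun i hi ↦ h i (hi.trans_le hm)

lemma poch_ne_zero (h : IsPerturbable p r δ x k) : poch x k ≠ 0 :=
  _root_.poch_ne_zero fun i hi ↦ (h i hi).1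

lemma poch_add_mul_div_poch (h : IsPerturbable p r δ x k) (c : ℤ) :
    poch (x + c * δ) k / poch x k = ∏ i ∈ range k, (1 + c * (δ / (x + i))) := by
  rw [poch, poch, ← prod_div_distrib]
  refine prod_congr rfl fun i hi ↦ ?_
  have := (h i (mem_range.mp hi)).1
  field_simp
  ring

lemma isFirstOrder_poch (h : IsPerturbable p r δ x k) (c : ℤ) :
    IsFirstOrder p r (poch (x + c * δ) k / poch x k) (c * ∑ i ∈ range k, δ / (x + i)) := by
  rw [h.poch_add_mul_div_poch, mul_sum]
  exact .prod fun i hi ↦ mul_mem_padicBall_left (intCast_mem_padicBall c) (h i hi).2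

lemma isFirstOrder_pochSplit (h : IsPerturbable p r δ x k) :
    IsFirstOrder p (2 * r) (pochSplit x δ k) (-∑ i ∈ range k, (δ / (x + i)) ^ 2) := by
  have hprod : pochSplit x δ k = ∏ i ∈ range k, (1 + -(δ / (x + i)) ^ 2) := by
    have h₁ := h.poch_add_mul_div_poch 1
    have h₂ := h.poch_add_mul_div_poch (-1)
    push_cast at h₁ h₂
    rw [one_mul] at h₁
    rw [neg_one_mul, ← sub_eq_add_neg] at h₂
    rw [pochSplit, sq, mul_div_mul_comm, h₁, h₂, ← prod_mul_distrib]
    exact prod_congr rfl fun i _ ↦ by ring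
  rw [hprod, ← sum_neg_distrib]
  exact .prod fun i hi ↦ neg_mem (pow_mem_padicBall (h i hi).2 2)

lemma one_sub_pochSplit_div_mem {y : ℚ} (hr : 0 < r) (hx : IsPerturbable p r δ x k)
    (hy : IsPerturbable p r δ y k) :
    1 - pochSplit x δ k / pochSplit y δ k ∈ padicBall p (2 * r) := by
  rw [← neg_sub]
  exact neg_mem
    (hx.isFirstOrder_pochSplit.div (Nat.mul_pos two_pos hr) hy.isFirstOrder_pochSplit).sub_one_mem

lemma sum_div_add_mul_sq_sub_mem (hr : 0 < r) (h : IsPerturbable p r δ x k) (c : ℤ) :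
    ∑ i ∈ range k, (δ / (x + c * δ + i)) ^ 2 -
      (∑ i ∈ range k, (δ / (x + i)) ^ 2 - 2 * c * ∑ i ∈ range k, (δ / (x + i)) ^ 3) ∈
        padicBall p (4 * r) := by
  rw [mul_sum, ← sum_sub_distrib, ← sum_sub_distrib]
  refine sum_mem fun i hi ↦ ?_
  obtain ⟨hxi, ht⟩ := h i (mem_range.mp hi)
  obtain ⟨t, htδ⟩ : ∃ t, t = δ / (x + i) := ⟨_, rfl⟩
  rw [← htδ] at ht ⊢
  have hct : c * t ∈ padicBall p r := mul_mem_padicBall_left (intCast_mem_padicBall c) ht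
  have hu : padicNorm p (1 + c * t) = 1 := (IsFirstOrder.one_add hct).padicNorm_eq_one hr
  have hu0 : 1 + c * t ≠ 0 := ne_zero_of_padicNorm_eq_one hu
  have hshift : δ / (x + c * δ + i) = t / (1 + c * t) := by
    have hδ : x + c * δ + i = (x + i) * (1 + c * t) := by
      rw [htδ]
      field_simp
      ring
    rw [hδ, ← div_div, ← htδ]
  have hcubic : (t / (1 + c * t)) ^ 2 - (t ^ 2 - 2 * c * t ^ 3) =
      t ^ 4 * (c ^ 2 * (1 + 2 * (1 + c * t))) / (1 + c * t) ^ 2 := by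
    have hsq : (1 + c * t) ^ 2 ≠ 0 := pow_ne_zero 2 hu0
    rw [div_pow, eq_div_iff hsq, sub_mul, div_mul_cancel₀ _ hsq]
    ring
  rw [hshift, hcubic]
  have hint : (c : ℚ) ^ 2 * (1 + 2 * (1 + c * t)) ∈ padicBall p 0 :=
    mul_mem_padicBall_left (mod_cast intCast_mem_padicBall (c ^ 2))
      (IsFirstOrder.one_add_mem (mul_mem_padicBall_left (mod_cast intCast_mem_padicBall 2)
        (IsFirstOrder.one_add_mem hct)))
  exact div_mem_padicBall (mul_mem_padicBall_right (pow_mem_padicBall ht 4) hint)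
    (by rw [IsAbsoluteValue.abv_pow (padicNorm p), hu, one_pow])

end IsPerturbable

end FirstOrder

section ThirdIntegers

lemma ne_zero_of_three_mul_eq {x : ℚ} {z : ℤ} (hx : 3 * x = z) (hz : z ≠ 0) : x ≠ 0 := by
  rintro rfl
  exact hz (by exact_mod_cast hx.symm.trans (mul_zero 3))

lemma not_dvd_of_natAbs_lt {m : ℕ} {z : ℤ} (h₀ : z ≠ 0) (h₁ : z.natAbs ≠ m)
    (h₂ : z.natAbs ≠ 2 * m) (h₃ : z.natAbs < 3 * m) : ¬ (m : ℤ) ∣ z := by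
  rw [Int.natCast_dvd]
  rintro ⟨c, hc⟩
  have hc3 : c < 3 := by
    by_contra! h
    nlinarith
  interval_cases c <;> omega

variable {p s n : ℕ}

lemma not_dvd_three_mul_add_one (hq : p ^ s = 3 * n + 1) {i : ℕ} (hi : i ≤ 3 * n) (hin : i ≠ n) :
    ¬ (p ^ s : ℤ) ∣ 3 * i + 1 := by
  rw [← Nat.cast_pow, hq]
  exact not_dvd_of_natAbs_lt (by omega) (by omega) (by omega) (by omega)

variable [Fact p.Prime]

lemma three_mul_add_one_mem_padicBall (hq : p ^ s = 3 * n + 1) :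
    (3 * n + 1 : ℚ) ∈ padicBall p s := by
  have hpn : (p ^ s : ℚ) = 3 * n + 1 := mod_cast hq
  exact hpn ▸ prime_pow_mem_padicBall p s

lemma isPerturbable_of_three_mul_eq (hq : p ^ s = 3 * n + 1) {x : ℚ} {z : ℤ} {k : ℕ}
    (hx : 3 * x = z)
    (hz : ∀ i : ℕ, i < k → z + 3 * i ≠ 0 ∧ (z + 3 * i).natAbs ≠ 3 * n + 1 ∧
      (z + 3 * i).natAbs ≠ 2 * (3 * n + 1) ∧ (z + 3 * i).natAbs < 3 * (3 * n + 1)) :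
    IsPerturbable p 1 (n + 1 / 3) x k := by
  intro i hi
  obtain ⟨h₀, h₁, h₂, h₃⟩ := hz i hi
  have hxi : 3 * (x + i) = (z + 3 * i : ℤ) := by push_cast; linear_combination hx
  have hdiv : (n + 1 / 3) / (x + i) = (3 * n + 1) / (z + 3 * i : ℤ) := by
    rw [← mul_div_mul_left _ _ (three_ne_zero (α := ℚ)), hxi]
    congr 1
    ring
  refine ⟨ne_zero_of_three_mul_eq hxi h₀, ?_⟩
  rw [hdiv]
  refine div_intCast_mem_padicBall (three_mul_add_one_mem_padicBall hq) ?_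
  exact_mod_cast hq ▸ not_dvd_of_natAbs_lt h₀ h₁ h₂ h₃

lemma isPerturbable_one (hq : p ^ s = 3 * n + 1) : IsPerturbable p 1 (n + 1 / 3) 1 (2 * n) :=
  isPerturbable_of_three_mul_eq (z := 3) hq (by norm_num) fun i hi ↦ by omega

lemma isPerturbable_one_third (hq : p ^ s = 3 * n + 1) :
    IsPerturbable p 1 (n + 1 / 3) (1 / 3) n :=
  isPerturbable_of_three_mul_eq (z := 1) hq (by norm_num) fun i hi ↦ by omega

lemma isPerturbable_two_thirds (hq : p ^ s = 3 * n + 1) :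
    IsPerturbable p 1 (n + 1 / 3) (2 / 3) n :=
  isPerturbable_of_three_mul_eq (z := 2) hq (by norm_num) fun i hi ↦ by omega

lemma isPerturbable_one_third_sub (hq : p ^ s = 3 * n + 1) :
    IsPerturbable p 1 (n + 1 / 3) (1 / 3 - n) n :=
  isPerturbable_of_three_mul_eq (z := 1 - 3 * n) hq (by push_cast; ring) fun i hi ↦ by omega

lemma isPerturbable_neg_one_third_sub (hq : p ^ s = 3 * n + 1) :
    IsPerturbable p 1 (n + 1 / 3) (-1 / 3 - 3 * n) (2 * n) :=
  isPerturbable_of_three_mul_eq (z := -1 - 9 * n) hq (by push_cast; ring) fun i hi ↦ by omega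

lemma not_dvd_two (hn : Even n) (hs : 0 < s) (hq : p ^ s = 3 * n + 1) : ¬ p ∣ 2 := by
  intro h
  have hp : p = 2 := (Nat.prime_dvd_prime_iff_eq Fact.out Nat.prime_two).mp h
  have h2 : p ∣ p ^ s := dvd_pow_self p hs.ne'
  obtain ⟨m, rfl⟩ := hn
  rw [hq, hp] at h2
  omega

lemma not_dvd_three (hs : 0 < s) (hq : p ^ s = 3 * n + 1) : ¬ p ∣ 3 := by
  intro h
  have hp : p = 3 := (Nat.prime_dvd_prime_iff_eq Fact.out Nat.prime_three).mp h
  have h3 : p ∣ p ^ s := dvd_pow_self p hs.ne'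
  rw [hq, hp] at h3
  omega

end ThirdIntegers

section ShortSum

/-- The correction term `q ^ 2 * ∑ j ∈ Icc 1 n, (1 / (3 * j - 1) ^ 2 - 1 / (3 * j) ^ 2)` of the
supercongruence for `q = 3 * n + 1`, written with `δ = q / 3` as a difference of sums of squares
`(δ / (x + i)) ^ 2`, the shape in which it arises from `pochSplit x δ n`. -/
def secondOrderCorrection (n : ℕ) : ℚ :=
  ∑ i ∈ range n, ((n + 1 / 3) / (2 / 3 + i : ℚ)) ^ 2 -
    ∑ i ∈ range n, ((n + 1 / 3) / (1 + i : ℚ)) ^ 2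

lemma dougallValue_eq_pochSplit_div (δ d : ℚ) (n : ℕ) :
    dougallValue (-δ) (-δ) (-δ) d n = pochSplit 1 δ n / pochSplit (1 - d) δ n := by
  have h₁ : 1 + -δ - -δ - -δ - d = 1 - d + δ := by ring
  have h₂ : 1 + -δ - -δ - -δ = 1 + δ := by ring
  have h₃ : 1 + -δ - -δ - d = 1 - d := by ring
  have h₄ : 1 + -δ - -δ = 1 := by ring
  have h₅ : 1 + -δ - d = 1 - d - δ := by ring
  rw [dougallValue, pochSplit, pochSplit, div_div_div_eq, h₁, h₂, h₃, h₄, h₅, ← sub_eq_add_neg]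
  congr 1 <;> ring

lemma sum_wzTerm_mul_pochSplit_short (n : ℕ) :
    ∑ k ∈ range (n + 1), wzTerm n k *
        (pochSplit (1 / 3) (n + 1 / 3) k / pochSplit (1 / 3 - n) (n + 1 / 3) k) =
      (3 * n + 1) * (poch (2 / 3) n / poch 1 n) ^ 3 *
        (pochSplit 1 (n + 1 / 3) n / pochSplit (2 / 3) (n + 1 / 3) n) := by
  obtain ⟨a, ha⟩ : ∃ a : ℚ, a = -(n + 1 / 3) := ⟨_, rfl⟩
  have key := dougall (a := a) (b := a) (c := a) (d := 1 / 3) (n := n)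
    (ne_zero_of_three_mul_eq (z := -1 - 3 * n) (by push_cast; linear_combination 3 * ha) (by omega))
    (fun j _ ↦ ne_zero_of_three_mul_eq (z := 2 - 3 * n + 3 * j)
      (by push_cast; linear_combination 3 * ha) (by omega))
    (fun j _ ↦ by rw [add_sub_cancel_right]; positivity)
    (fun j _ ↦ by rw [add_sub_cancel_right]; positivity)
    (fun j _ ↦ ne_zero_of_three_mul_eq (z := 1 - 3 * n + 3 * j)
      (by push_cast; linear_combination 3 * ha) (by omega))
    (fun j _ ↦ ne_zero_of_three_mul_eq (z := 3 * n + 3 + 3 * j)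
      (by push_cast; linear_combination -3 * ha) (by omega))
  have hval := dougallValue_eq_pochSplit_div (n + 1 / 3) (1 / 3) n
  rw [show (1 - 1 / 3 : ℚ) = 2 / 3 by norm_num, ← ha] at hval
  rw [← hval, ← key, mul_sum]
  refine sum_congr rfl fun k _ ↦ ?_
  have he : 1 + 2 * a - a - a - 1 / 3 + n = 1 / 3 + (n + 1 / 3) := by ring
  have hf : (-n : ℚ) = 1 / 3 - (n + 1 / 3) := by ring
  have hd : 1 + a - 1 / 3 = 1 / 3 - n := by rw [ha]; ring
  have ha' : (-1 / 3 - n : ℚ) = a := by rw [ha]; ring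
  rw [wzTerm_eq_vwpTerm, mul_assoc, he, hf, vwpTerm_split, hd, ha']
  · exact poch_ne_zero fun i _ ↦ by positivity
  · exact poch_ne_zero fun i _ ↦ ne_zero_of_three_mul_eq (z := 1 - 3 * n + 3 * i)
      (by push_cast; linear_combination 3 * ha) (by omega)

lemma wzBase_eq_multichoose_mul {n k : ℕ} (hk : k ≤ n) :
    wzBase n k = Ring.multichoose (2 / 3 : ℚ) (n - k) * Ring.multichoose (-1 / 3 - n : ℚ) k *
      (poch (1 / 3) k / poch (-n) k) := by
  obtain ⟨m, rfl⟩ := Nat.exists_eq_add_of_le' hk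
  have h₁ : (1 - (1 / 3 - (m + k : ℕ)) - k : ℚ) = 2 / 3 + m := by push_cast; ring
  have h₂ : (1 - -(m + k : ℕ) - k : ℚ) = 1 + m := by push_cast; ring
  have hne : poch (2 / 3 + m) k ≠ 0 := poch_ne_zero fun i _ ↦ by positivity
  rw [wzBase, ← poch_div_poch_one, ← poch_div_poch_one, Nat.add_sub_cancel,
    poch_reflect (1 / 3 - _), poch_reflect (-_), h₁, h₂, poch_add, poch_add]
  generalize poch (2 / 3 + m : ℚ) k = D at *
  field_simp

variable {p s n : ℕ} [Fact p.Prime]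

lemma exists_wzBase_eq_div_mul (hs : 0 < s) (hq : p ^ s = 3 * n + 1) {k : ℕ} (hk₀ : 0 < k)
    (hk : k ≤ n) : ∃ J ∈ padicBall p 0, wzBase n k = (3 * n + 1) / k * J := by
  obtain ⟨l, rfl⟩ := Nat.exists_eq_add_one.mpr hk₀
  have hthird (z : ℤ) := intCast_div_three_mem_padicBall (not_dvd_three hs hq) z
  have hunit : padicNorm p (poch (-n) (l + 1) / poch (1 / 3) (l + 1)) = 1 := by
    have h := (((isPerturbable_one_third hq).mono hk).isFirstOrder_poch (-1)).padicNorm_eq_one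
      one_pos
    rwa [show (1 / 3 + (-1 : ℤ) * (n + 1 / 3) : ℚ) = -n by push_cast; ring] at h
  refine ⟨Ring.multichoose (2 / 3 : ℚ) (n - (l + 1)) * ((-1 : ℤ) / 3 *
    Ring.multichoose (-1 / 3 - n + 1 : ℚ) l) / (poch (-n) (l + 1) / poch (1 / 3) (l + 1)),
    div_mem_padicBall (mul_mem_padicBall_left (multichoose_mem_padicBall ?_ _)
      (mul_mem_padicBall_left (hthird (-1)) (multichoose_mem_padicBall ?_ _))) hunit, ?_⟩
  · simpa only [Int.cast_ofNat] using hthird 2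
  · convert hthird (2 - 3 * n) using 1
    push_cast
    ring
  · rw [wzBase_eq_multichoose_mul hk, multichoose_succ_eq, div_div_eq_mul_div]
    push_cast
    field_simp
    ring

lemma wzTerm_short_mem_padicBall (hs : 0 < s) (hq : p ^ s = 3 * n + 1) {k : ℕ} (hk₀ : 0 < k)
    (hk : k ≤ n) : wzTerm n k ∈ padicBall p (s + 2) := by
  have hqk : ((3 * n + 1) / k : ℚ) ∈ padicBall p 1 := by
    rw [← Int.cast_natCast k]
    refine div_intCast_mem_padicBall (three_mul_add_one_mem_padicBall hq) ?_
    exact_mod_cast Nat.not_dvd_of_pos_of_lt hk₀ (by omega)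
  obtain ⟨J, hJ, hbase⟩ : ∃ J ∈ padicBall p 0, wzBase n k = (3 * n + 1) / k * J :=
    exists_wzBase_eq_div_mul hs hq hk₀ hk
  have hterm : wzTerm n k =
      (3 * n + 1) * (((3 * n + 1) / k) ^ 2 * (((3 * n + 1) / k - 6) * J ^ 3)) := by
    rw [wzTerm, hbase]
    field_simp
  rw [hterm]
  have h6 : ((3 * n + 1) / k - 6 : ℚ) ∈ padicBall p 0 :=
    sub_mem (mem_padicBall_of_le zero_le_one hqk) (mod_cast intCast_mem_padicBall 6)
  exact mul_mem_padicBall (three_mul_add_one_mem_padicBall hq) (mul_mem_padicBall_right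
    (pow_mem_padicBall hqk 2) (mul_mem_padicBall_left h6 (pow_mem_padicBall hJ 3)))

lemma three_mul_add_one_mul_poch_mem_padicBall (hs : 0 < s) (hq : p ^ s = 3 * n + 1) :
    (3 * n + 1) * (poch (2 / 3) n / poch 1 n) ^ 3 ∈ padicBall p s := by
  have h := multichoose_mem_padicBall (intCast_div_three_mem_padicBall (not_dvd_three hs hq) 2) n
  rw [← poch_div_poch_one, Int.cast_ofNat] at h
  exact mul_mem_padicBall_right (three_mul_add_one_mem_padicBall hq) (pow_mem_padicBall h 3)

lemma sum_sub_mul_mem_padicBall {r t m : ℕ} {f g : ℕ → ℚ} {C D E : ℚ}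
    (hfg : ∑ k ∈ range m, f k * g k = C * D)
    (hf : ∀ k < m, f k * (1 - g k) ∈ padicBall p (r + t)) (hC : C ∈ padicBall p r)
    (hD : D - E ∈ padicBall p t) : ∑ k ∈ range m, f k - C * E ∈ padicBall p (r + t) := by
  have hsplit : ∑ k ∈ range m, f k - C * E =
      ∑ k ∈ range m, f k * (1 - g k) + C * (D - E) := by
    simp only [mul_sub, mul_one, sum_sub_distrib, hfg]
    ring
  rw [hsplit]
  exact add_mem (sum_mem fun k hk ↦ hf k (mem_range.mp hk)) (mul_mem_padicBall hC hD)

theorem sum_wzTerm_short (hs : 0 < s) (hq : p ^ s = 3 * n + 1) :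
    ∑ k ∈ range (n + 1), wzTerm n k -
      (3 * n + 1) * (poch (2 / 3) n / poch 1 n) ^ 3 * (1 + secondOrderCorrection n) ∈
        padicBall p (s + 4) := by
  refine sum_sub_mul_mem_padicBall (sum_wzTerm_mul_pochSplit_short n) (fun k hk ↦ ?_)
    (three_mul_add_one_mul_poch_mem_padicBall hs hq) ?_
  · obtain rfl | hk₀ := k.eq_zero_or_pos
    · simp only [pochSplit, poch_zero, one_pow, mul_one, div_one, sub_self, mul_zero, zero_mem]
    · have hkn : k ≤ n := Nat.lt_succ_iff.mp hk
      have hg := ((isPerturbable_one_third hq).mono hkn).one_sub_pochSplit_div_mem one_pos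
        ((isPerturbable_one_third_sub hq).mono hkn)
      have h := mul_mem_padicBall (wzTerm_short_mem_padicBall hs hq hk₀ hkn) hg
      rwa [add_assoc] at h
  · have h := (((isPerturbable_one hq).mono (m := n) (by omega)).isFirstOrder_pochSplit.div two_pos
      (isPerturbable_two_thirds hq).isFirstOrder_pochSplit).2
    rwa [neg_sub_neg] at h

end ShortSum

section LongSum

lemma pochSplit_neg (x δ : ℚ) (k : ℕ) : pochSplit x (-δ) k = pochSplit x δ k := by
  rw [pochSplit, pochSplit, sub_neg_eq_add, ← sub_eq_add_neg, mul_comm (poch (x + δ) k)]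

lemma mul_dougallValue_long (n : ℕ) :
    (9 * n + 1) * (poch (2 / 3) (3 * n) / poch 1 (3 * n)) ^ 3 *
        dougallValue (-1 / 3 - 3 * n) (1 / 3) (1 / 3) (1 / 3) (2 * n) =
      (3 * n + 1) * (poch (2 / 3) n / poch 1 n) ^ 3 := by
  obtain ⟨a, ha⟩ : ∃ a : ℚ, a = -1 / 3 - 3 * n := ⟨_, rfl⟩
  have h₁ : 1 + a - 1 / 3 - 1 / 3 = -(3 * n) := by rw [ha]; ring
  have h₂ : 1 + a - 1 / 3 = 1 / 3 - 3 * n := by rw [ha]; ring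
  have h₃ : -(3 * n) - 1 / 3 = a := by rw [ha]; ring
  have h₄ : 1 - -(3 * n) - (2 * n : ℕ) = (1 + n : ℚ) := by push_cast; ring
  have h₅ : 1 - (1 / 3 - 3 * n) - (2 * n : ℕ) = (2 / 3 + n : ℚ) := by push_cast; ring
  have hshift : (9 * n + 1) * poch (1 + a) (2 * n) = (3 * n + 1) * poch a (2 * n) := by
    have h := poch_mul_add_eq a (2 * n)
    rw [add_comm a 1, Nat.cast_mul, Nat.cast_ofNat] at h
    linear_combination 3 * h + 3 * (poch (1 + a) (2 * n) - poch a (2 * n)) * ha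
  have ha₀ : poch a (2 * n) ≠ 0 := poch_ne_zero fun i _ ↦
    ne_zero_of_three_mul_eq (z := -1 - 9 * n + 3 * i)
      (by push_cast; linear_combination 3 * ha) (by omega)
  have hn₁ : poch (1 + n) (2 * n) ≠ 0 := poch_ne_zero fun i _ ↦ by positivity
  have hn₂ : poch (2 / 3 + n) (2 * n) ≠ 0 := poch_ne_zero fun i _ ↦ by positivity
  have h1n : poch 1 n ≠ 0 := poch_ne_zero fun i _ ↦ by positivity
  rw [← ha, dougallValue, h₁, h₂, h₃, poch_reflect (-(3 * n)), poch_reflect (1 / 3 - 3 * n),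
    h₄, h₅, show 3 * n = n + 2 * n by ring, poch_add, poch_add]
  generalize poch (1 + a) (2 * n) = X at *
  generalize poch a (2 * n) = Y at *
  generalize poch (1 + n) (2 * n) = U at *
  generalize poch (2 / 3 + n) (2 * n) = V at *
  generalize poch (2 / 3) n = A at *
  generalize poch 1 n = B at *
  have hsign : ((-1 : ℚ) ^ (2 * n)) = 1 := by simp
  rw [hsign]
  field_simp
  linear_combination A ^ 3 * hshift

lemma sum_wzTerm_mul_pochSplit_long (n : ℕ) :
    ∑ k ∈ range (2 * n + 1), wzTerm (3 * n) k *
        (pochSplit (-1 / 3 - 3 * n) (n + 1 / 3) k / pochSplit 1 (n + 1 / 3) k) =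
      (3 * n + 1) * (poch (2 / 3) n / poch 1 n) ^ 3 := by
  obtain ⟨a, ha⟩ : ∃ a : ℚ, a = -1 / 3 - 3 * n := ⟨_, rfl⟩
  have hb (j : ℕ) : 1 + a - 1 / 3 + j ≠ 0 :=
    ne_zero_of_three_mul_eq (z := 1 - 9 * n + 3 * j)
      (by push_cast; linear_combination 3 * ha) (by omega)
  have ha' (j : ℕ) : a + j ≠ 0 :=
    ne_zero_of_three_mul_eq (z := -1 - 9 * n + 3 * j)
      (by push_cast; linear_combination 3 * ha) (by omega)
  have key := dougall (a := a) (b := 1 / 3) (c := 1 / 3) (d := 1 / 3) (n := 2 * n)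
    (by simpa using ha' 0)
    (fun j _ ↦ ne_zero_of_three_mul_eq (z := 2 - 9 * n + 3 * j)
      (by push_cast; linear_combination 3 * ha) (by omega))
    (fun j _ ↦ hb j) (fun j _ ↦ hb j) (fun j _ ↦ hb j)
    (fun j _ ↦ by convert ha' j using 2; ring)
  have hval := mul_dougallValue_long n
  rw [← ha] at hval ⊢
  rw [← hval, ← key, mul_sum]
  refine sum_congr rfl fun k _ ↦ ?_
  have he : 1 + 2 * a - 1 / 3 - 1 / 3 - 1 / 3 + (2 * n : ℕ) = a + -(n + 1 / 3) := by
    rw [ha]; push_cast; ring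
  have hf : (-(2 * n : ℕ) : ℚ) = a - -(n + 1 / 3) := by rw [ha]; push_cast; ring
  have ha'' : (-1 / 3 - (3 * n : ℕ) : ℚ) = a := by rw [ha]; push_cast; ring
  have h1 : 1 + a - a = 1 := by ring
  rw [wzTerm_eq_vwpTerm, mul_assoc, he, hf, vwpTerm_split, h1, ha'', pochSplit_neg, pochSplit_neg,
    vwpTerm_swap]
  · push_cast
    ring
  · exact poch_ne_zero fun i _ ↦ ha' i
  · rw [h1]
    exact poch_ne_zero fun i _ ↦ by positivity

variable {p s n : ℕ} [Fact p.Prime]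

lemma wzBase_long_self (hn : Even n) : wzBase (3 * n) n =
    poch (1 / 3 + (n + 1 / 3)) n * poch (2 / 3 + 2 * (n + 1 / 3)) n * poch (1 / 3) n /
      (poch (1 / 3 - (n + 1 / 3)) n * poch (2 / 3 + (n + 1 / 3)) n *
        poch (1 / 3 + 2 * (n + 1 / 3)) n) * (poch (2 / 3) n / poch 1 n) := by
  have h₁ : poch (1 / 3 - (n + 1 / 3)) n = poch 1 n := by
    rw [poch_reflect 1, hn.neg_one_pow, one_mul]
    ring_nf
  have h₂ : poch (2 / 3 + 2 * (n + 1 / 3)) n = poch (-1 / 3 - 3 * n) n := by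
    rw [poch_reflect (-1 / 3 - _), hn.neg_one_pow, one_mul]
    ring_nf
  have h₃ : poch (2 / 3) (3 * n) = poch (2 / 3) n * poch (1 / 3 + (n + 1 / 3)) n *
      poch (1 / 3 - 3 * n) n := by
    rw [poch_reflect (1 / 3 - _), hn.neg_one_pow, one_mul, show 3 * n = n + n + n by ring,
      poch_add, poch_add]
    push_cast
    ring_nf
  have h₄ : poch 1 (3 * n) = poch 1 n * poch (2 / 3 + (n + 1 / 3)) n *
      poch (1 / 3 + 2 * (n + 1 / 3)) n := by
    rw [show 3 * n = n + n + n by ring, poch_add, poch_add]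
    push_cast
    ring_nf
  have hne : poch (1 / 3 - 3 * n) n ≠ 0 := poch_ne_zero fun i _ ↦
    ne_zero_of_three_mul_eq (z := 1 - 9 * n + 3 * i) (by push_cast; ring) (by omega)
  rw [wzBase, h₁, h₂, h₃, h₄]
  push_cast
  generalize poch (1 / 3 - 3 * n) n = D at *
  field_simp

/-- For `δ = n + 1 / 3`, the number `R` is a product of powers of ratios `(x + c δ)_n / (x)_n` with
`x = 1 / 3` or `x = 2 / 3`, in which the terms linear in `δ` cancel. -/
lemma exists_wzBase_long_self (hn : Even n) (hq : p ^ s = 3 * n + 1) :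
    ∃ R, R - 1 ∈ padicBall p 2 ∧ wzBase (3 * n) n = R * (poch (2 / 3) n / poch 1 n) := by
  refine ⟨_, ?_, wzBase_long_self hn⟩
  obtain ⟨δ, hδ⟩ : ∃ δ : ℚ, δ = n + 1 / 3 := ⟨_, rfl⟩
  have hx := isPerturbable_one_third hq
  have hy := isPerturbable_two_thirds hq
  have hreflect : poch (2 / 3 - δ) n = poch (2 / 3) n := by
    rw [poch_reflect (2 / 3), hn.neg_one_pow, one_mul, hδ]
    ring_nf
  rw [← hδ] at hx hy ⊢
  have h := (((hx.isFirstOrder_poch 1).div one_pos (hx.isFirstOrder_poch (-1))).div one_pos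
    (hx.isFirstOrder_poch 2)).mul (((hy.isFirstOrder_poch 2).mul (hy.isFirstOrder_poch (-1))).div
    one_pos (hy.isFirstOrder_poch 1))
  have hcancel (x y : ℚ) : (1 : ℤ) * x - (-1 : ℤ) * x - (2 : ℤ) * x +
      ((2 : ℤ) * y + (-1 : ℤ) * y - (1 : ℤ) * y) = 0 := by
    push_cast
    ring
  have h2 := h.2
  rw [hcancel, add_zero] at h2
  push_cast at h2
  rw [one_mul, neg_one_mul, ← sub_eq_add_neg, ← sub_eq_add_neg, hreflect,
    div_self hy.poch_ne_zero, mul_one] at h2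
  convert h2 using 2
  field_simp [hx.poch_ne_zero, hy.poch_ne_zero]

/-- The terms of the first sum are `(t / (1 - 3 * t)) ^ 2`, where `t` runs over the quotients in the
second. Reversing the order of summation replaces `t` by `t / (t - 1)`, and comparing the two
expansions shows that `∑ t ^ 3` is negligible. -/
lemma sum_div_sq_sub_sum_div_sq_mem (hq : p ^ s = 3 * n + 1) :
    ∑ i ∈ range n, ((n + 1 / 3) / (-1 / 3 - 3 * n + i) : ℚ) ^ 2 -
      ∑ i ∈ range n, ((n + 1 / 3) / (2 / 3 + i) : ℚ) ^ 2 ∈ padicBall p 4 := by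
  have hreverse : ∑ i ∈ range n, ((n + 1 / 3) / (2 / 3 + (-1 : ℤ) * (n + 1 / 3) + i) : ℚ) ^ 2 =
      ∑ i ∈ range n, ((n + 1 / 3) / (2 / 3 + i) : ℚ) ^ 2 := by
    rw [← sum_range_reflect]
    refine sum_congr rfl fun i hi ↦ ?_
    rw [Nat.sub_sub, Nat.cast_sub (by have := mem_range.mp hi; omega), ← neg_sq, ← div_neg]
    push_cast
    ring_nf
  have hshift : (2 / 3 + (-3 : ℤ) * (n + 1 / 3) : ℚ) = -1 / 3 - 3 * n := by push_cast; ring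
  have h₁ := (isPerturbable_two_thirds hq).sum_div_add_mul_sq_sub_mem one_pos (-1)
  have h₃ := (isPerturbable_two_thirds hq).sum_div_add_mul_sq_sub_mem one_pos (-3)
  rw [hreverse] at h₁
  rw [hshift] at h₃
  have h := add_mem h₃ (mul_mem_padicBall_left (intCast_mem_padicBall (-3)) h₁)
  push_cast at h
  convert h using 1
  ring

lemma secondOrderCorrection_mem_padicBall (hq : p ^ s = 3 * n + 1) :
    secondOrderCorrection n ∈ padicBall p 2 := by
  have hx := (isPerturbable_two_thirds hq).isFirstOrder_pochSplit.1
  have hy := ((isPerturbable_one hq).mono (m := n) (by omega)).isFirstOrder_pochSplit.1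
  exact sub_mem (neg_mem_iff.mp hx) (neg_mem_iff.mp hy)

lemma one_sub_pochSplit_div_sub_mem (hq : p ^ s = 3 * n + 1) :
    1 - pochSplit (-1 / 3 - 3 * n) (n + 1 / 3) n / pochSplit 1 (n + 1 / 3) n -
      secondOrderCorrection n ∈ padicBall p 4 := by
  have hx := (isPerturbable_neg_one_third_sub hq).mono (m := n) (by omega)
  have hy := (isPerturbable_one hq).mono (m := n) (by omega)
  have hsplit := (hx.isFirstOrder_pochSplit.div two_pos hy.isFirstOrder_pochSplit).2
  have h := neg_mem (sub_mem hsplit (sum_div_sq_sub_sum_div_sq_mem hq))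
  have hcancel (g S T U : ℚ) : -(g - (1 + (-S - -U)) - (S - T)) = 1 - g - (T - U) := by ring
  rwa [hcancel] at h

lemma mul_pow_three_mul_sub_mem {r : ℕ} {C R G τ : ℚ} (hC : C ∈ padicBall p r)
    (hR : R - 1 ∈ padicBall p 2) (hG : G - τ ∈ padicBall p 4) (hτ : τ ∈ padicBall p 2) :
    C * R ^ 3 * G - C * τ ∈ padicBall p (r + 4) := by
  have hR₀ : R ∈ padicBall p 0 := by
    rw [← add_sub_cancel 1 R]
    exact IsFirstOrder.one_add_mem hR
  have hR₃ : R ^ 3 - 1 ∈ padicBall p 2 := by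
    rw [show R ^ 3 - 1 = (R - 1) * (R * R + (1 + R)) by ring]
    exact mul_mem_padicBall_right hR
      (add_mem (mul_mem_padicBall_left hR₀ hR₀) (IsFirstOrder.one_add_mem hR₀))
  rw [show C * R ^ 3 * G - C * τ = C * (R ^ 3 * (G - τ) + (R ^ 3 - 1) * τ) by ring]
  exact mul_mem_padicBall hC (add_mem (mul_mem_padicBall_left (pow_mem_padicBall hR₀ 3) hG)
    (mul_mem_padicBall (r := 2) (t := 2) hR₃ hτ))

lemma wzTerm_long_self_mul_mem (hn : Even n) (hs : 0 < s) (hq : p ^ s = 3 * n + 1) :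
    wzTerm (3 * n) n *
        (1 - pochSplit (-1 / 3 - 3 * n) (n + 1 / 3) n / pochSplit 1 (n + 1 / 3) n) -
      (3 * n + 1) * (poch (2 / 3) n / poch 1 n) ^ 3 * secondOrderCorrection n ∈
        padicBall p (s + 4) := by
  obtain ⟨R, hR, hbase⟩ := exists_wzBase_long_self hn hq
  have hterm : wzTerm (3 * n) n = (3 * n + 1) * (poch (2 / 3) n / poch 1 n) ^ 3 * R ^ 3 := by
    rw [wzTerm, hbase]
    push_cast
    ring
  rw [hterm]
  exact mul_pow_three_mul_sub_mem (three_mul_add_one_mul_poch_mem_padicBall hs hq) hR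
    (one_sub_pochSplit_div_sub_mem hq) (secondOrderCorrection_mem_padicBall hq)

lemma padicNorm_poch_sub_div_poch (hn : Even n) (hs : 0 < s) (hq : p ^ s = 3 * n + 1) {k : ℕ}
    (hk : k ≤ 3 * n) :
    padicNorm p (poch (1 / 3 - (3 * n + 1)) k / poch (1 / 3) k) = 1 := by
  rw [poch, poch, ← prod_div_distrib]
  refine prod_induction _ (padicNorm p · = 1)
    (fun x y hx hy ↦ by rw [padicNorm.mul, hx, hy, one_mul]) padicNorm.one fun i hi ↦ ?_
  obtain rfl | hin := eq_or_ne i n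
  · have h2 : (1 / 3 - (3 * i + 1) + i) / (1 / 3 + i) = (-(2 : ℕ) : ℚ) := by
      rw [div_eq_iff (by positivity)]
      push_cast
      ring
    rw [h2, padicNorm.neg, padicNorm.nat_eq_one_iff]
    exact not_dvd_two hn hs hq
  · refine padicNorm_eq_one_of_sub_mem ?_
    have hi3 : i ≤ 3 * n := ((mem_range.mp hi).trans_le hk).le
    have hsmall : ((3 * n + 1) / (3 * i + 1 : ℤ) : ℚ) ∈ padicBall p 1 :=
      div_intCast_mem_padicBall (three_mul_add_one_mem_padicBall hq)
        (not_dvd_three_mul_add_one hq hi3 hin)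
    have h3 : (1 / 3 - (3 * n + 1) + i) / (1 / 3 + i) - 1 =
        (-3 : ℤ) * ((3 * n + 1) / (3 * i + 1 : ℤ) : ℚ) := by
      push_cast
      field_simp
      ring
    rw [h3]
    exact mul_mem_padicBall_left (intCast_mem_padicBall _) hsmall

lemma wzBase_long_eq (n k : ℕ) : wzBase (3 * n) k =
    (3 * n + 1) / (3 * k + 1 - 3 * (3 * n + 1)) *
      (-3 * Ring.multichoose (2 / 3 : ℚ) (3 * n + 1) * Ring.multichoose (-1 / 3 - 3 * n : ℚ) k /
        (poch (1 / 3 - (3 * n + 1)) k / poch (1 / 3) k)) := by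
  have hshift := poch_mul_add_eq (1 / 3 - (3 * n + 1)) k
  rw [show (1 / 3 - (3 * n + 1) + 1 : ℚ) = 1 / 3 - 3 * n by ring] at hshift
  have hw : (3 * k + 1 - 3 * (3 * n + 1) : ℚ) ≠ 0 :=
    ne_zero_of_three_mul_eq (z := 3 * (3 * k + 1 - 3 * (3 * n + 1))) (by push_cast; ring) (by omega)
  have hV : poch (1 / 3 - (3 * n + 1)) k ≠ 0 := poch_ne_zero fun i _ ↦
    ne_zero_of_three_mul_eq (z := -2 - 9 * n + 3 * i) (by push_cast; ring) (by omega)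
  have hG : poch (1 / 3 - 3 * n) k ≠ 0 := poch_ne_zero fun i _ ↦
    ne_zero_of_three_mul_eq (z := 1 - 9 * n + 3 * i) (by push_cast; ring) (by omega)
  have hB : poch (1 / 3) k ≠ 0 := poch_ne_zero fun i _ ↦ by positivity
  have hF (m : ℕ) : poch 1 m ≠ 0 := poch_ne_zero fun i _ ↦ by positivity
  have hFk := hF k
  have hFn := hF (3 * n)
  rw [wzBase, ← poch_div_poch_one, ← poch_div_poch_one, poch_succ, poch_succ]
  push_cast
  generalize poch (1 / 3 - 3 * n) k = G at *
  generalize poch (1 / 3 - (3 * n + 1)) k = V at *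
  generalize poch (-1 / 3 - 3 * n) k = A at *
  generalize poch (1 / 3) k = B at *
  generalize poch 1 k = F at *
  generalize poch 1 (3 * n) = Q at *
  generalize poch (2 / 3) (3 * n) = P at *
  field_simp
  linear_combination 3 * P * A * (1 + 3 * n) * hshift

lemma wzTerm_long_mem_padicBall (hn : Even n) (hs : 0 < s) (hq : p ^ s = 3 * n + 1) {k r : ℕ}
    (hk : k ≤ 3 * n) (hkn : k ≠ n)
    (hr : Ring.multichoose (-1 / 3 - 3 * n : ℚ) k ∈ padicBall p r) :
    wzTerm (3 * n) k ∈ padicBall p (s + (2 + 3 * r)) := by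
  obtain ⟨w, hw⟩ : ∃ w : ℤ, w = 3 * k + 1 - 3 * (3 * n + 1) := ⟨_, rfl⟩
  have hqw : ((3 * n + 1) / w : ℚ) ∈ padicBall p 1 := by
    refine div_intCast_mem_padicBall (three_mul_add_one_mem_padicBall hq) fun h ↦ ?_
    have hqz : (p ^ s : ℤ) = 3 * n + 1 := mod_cast hq
    rw [hw, ← hqz] at h
    exact not_dvd_three_mul_add_one hq hk hkn ((dvd_sub_left (dvd_mul_left _ _)).mp h)
  have h23 : Ring.multichoose (2 / 3 : ℚ) (3 * n + 1) ∈ padicBall p 0 :=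
    multichoose_mem_padicBall (by simpa only [Int.cast_ofNat] using
      intCast_div_three_mem_padicBall (not_dvd_three hs hq) 2) _
  obtain ⟨J, hJ, hbase⟩ : ∃ J ∈ padicBall p r, wzBase (3 * n) k = (3 * n + 1) / w * J := by
    refine ⟨_, ?_, by rw [hw]; push_cast; exact wzBase_long_eq n k⟩
    refine div_mem_padicBall (mul_mem_padicBall_left (mul_mem_padicBall_left ?_ h23) hr)
      (padicNorm_poch_sub_div_poch hn hs hq hk)
    exact_mod_cast intCast_mem_padicBall (-3)
  have hterm : wzTerm (3 * n) k =
      (3 * n + 1) * (((3 * n + 1) / w) ^ 2 * ((-2 - 3 * ((3 * n + 1) / w)) * J ^ 3)) := by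
    have hw₀ : (w : ℚ) ≠ 0 := Int.cast_ne_zero.mpr (by omega)
    have hlin : (3 * (3 * n : ℕ) + 1 - 6 * k : ℚ) = -2 * w - 3 * (3 * n + 1) := by
      rw [hw]
      push_cast
      ring
    rw [wzTerm, hbase, hlin]
    field_simp
  rw [hterm]
  have hint : (-2 - 3 * ((3 * n + 1) / w) : ℚ) ∈ padicBall p 0 :=
    sub_mem (mod_cast intCast_mem_padicBall (-2))
      (mul_mem_padicBall_left (mod_cast intCast_mem_padicBall 3)
        (mem_padicBall_of_le zero_le_one hqw))
  exact mul_mem_padicBall (three_mul_add_one_mem_padicBall hq) (mul_mem_padicBall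
    (pow_mem_padicBall hqw 2) (mul_mem_padicBall_left hint (pow_mem_padicBall hJ 3)))

lemma sum_sub_mul_one_add_mem_padicBall {r m j : ℕ} {f g : ℕ → ℚ} {C τ : ℚ} (hj : j < m)
    (hfg : ∑ k ∈ range m, f k * g k = C)
    (hf : ∀ k < m, k ≠ j → f k * (1 - g k) ∈ padicBall p r)
    (hfj : f j * (1 - g j) - C * τ ∈ padicBall p r) :
    ∑ k ∈ range m, f k - C * (1 + τ) ∈ padicBall p r := by
  have hsplit : ∑ k ∈ range m, f k - C * (1 + τ) =
      ∑ k ∈ (range m).erase j, f k * (1 - g k) + (f j * (1 - g j) - C * τ) := by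
    rw [sum_erase_eq_sub (mem_range.mpr hj)]
    simp only [mul_sub, mul_one, sum_sub_distrib, hfg]
    ring
  rw [hsplit]
  refine add_mem (sum_mem fun k hk ↦ ?_) hfj
  obtain ⟨hkj, hk⟩ := mem_erase.mp hk
  exact hf k (mem_range.mp hk) hkj

lemma multichoose_neg_one_third_sub_mem_padicBall (hs : 0 < s) (hq : p ^ s = 3 * n + 1) (k : ℕ) :
    Ring.multichoose (-1 / 3 - 3 * n : ℚ) k ∈ padicBall p 0 := by
  refine multichoose_mem_padicBall ?_ k
  convert intCast_div_three_mem_padicBall (not_dvd_three hs hq) (-1 - 9 * n) using 1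
  push_cast
  ring

lemma multichoose_neg_one_third_sub_mem_padicBall_one (hs : 0 < s) (hq : p ^ s = 3 * n + 1) {k : ℕ}
    (hk₀ : 2 * n < k) (hk : k ≤ 3 * n) :
    Ring.multichoose (-1 / 3 - 3 * n : ℚ) k ∈ padicBall p 1 := by
  have hδ : (-(3 * n + 1) / (3 : ℕ) : ℚ) ∈ padicBall p s :=
    div_mem_padicBall (neg_mem (three_mul_add_one_mem_padicBall hq))
      ((padicNorm.nat_eq_one_iff 3).mpr (not_dvd_three hs hq))
  convert multichoose_sub_natCast_mem_padicBall_one hδ hk₀ (by omega) using 2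
  push_cast
  ring

theorem sum_wzTerm_long (hn : Even n) (hs : 0 < s) (hq : p ^ s = 3 * n + 1) :
    ∑ k ∈ range (3 * n + 1), wzTerm (3 * n) k -
      (3 * n + 1) * (poch (2 / 3) n / poch 1 n) ^ 3 * (1 + secondOrderCorrection n) ∈
        padicBall p (s + 4) := by
  have hbody : ∑ k ∈ range (2 * n + 1), wzTerm (3 * n) k -
      (3 * n + 1) * (poch (2 / 3) n / poch 1 n) ^ 3 * (1 + secondOrderCorrection n) ∈
        padicBall p (s + 4) := by
    refine sum_sub_mul_one_add_mem_padicBall (j := n) (by omega)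
      (sum_wzTerm_mul_pochSplit_long n) (fun k hk hkn ↦ ?_) (wzTerm_long_self_mul_mem hn hs hq)
    have hf := wzTerm_long_mem_padicBall hn hs hq (by omega) hkn
      (multichoose_neg_one_third_sub_mem_padicBall hs hq k)
    have hg := ((isPerturbable_neg_one_third_sub hq).mono (m := k)
      (by omega)).one_sub_pochSplit_div_mem one_pos ((isPerturbable_one hq).mono (by omega))
    have h := mul_mem_padicBall hf hg
    exact mem_padicBall_of_le (by omega) h
  have htail : ∑ i ∈ range n, wzTerm (3 * n) (2 * n + 1 + i) ∈ padicBall p (s + 4) := by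
    refine sum_mem fun i hi ↦ ?_
    have hin := mem_range.mp hi
    exact mem_padicBall_of_le (by omega) (wzTerm_long_mem_padicBall hn hs hq (r := 1) (by omega)
      (by omega) (multichoose_neg_one_third_sub_mem_padicBall_one hs hq (by omega) (by omega)))
  rw [show 3 * n + 1 = 2 * n + 1 + n by ring, sum_range_add, add_sub_right_comm]
  exact add_mem hbody htail

end LongSum

lemma sq_mul_sum_Icc_eq_secondOrderCorrection (n : ℕ) :
    (3 * n + 1 : ℚ) ^ 2 * ∑ j ∈ Icc 1 n, (1 / (3 * (j : ℚ) - 1) ^ 2 - 1 / (3 * (j : ℚ)) ^ 2) =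
      secondOrderCorrection n := by
  rw [← Ico_add_one_right_eq_Icc, sum_Ico_eq_sum_range, secondOrderCorrection, ← sum_sub_distrib,
    mul_sum, Nat.add_sub_cancel]
  refine sum_congr rfl fun i _ ↦ ?_
  have h₁ : (3 * (1 + i : ℕ) - 1 : ℚ) = 3 * (2 / 3 + i) := by push_cast; ring
  have h₂ : (3 * (1 + i : ℕ) : ℚ) = 3 * (1 + i) := by push_cast; ring
  rw [h₁, h₂]
  field_simp

theorem stmt4 (p : ℕ) (hp : p.Prime) (hodd : Odd p) (s : ℕ) (hs : 0 < s)
    (hmod : p ^ s % 3 = 1)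
    (m : ℕ) (hm : m = (p ^ s - 1) / 3 ∨ m = p ^ s - 1) :
    pcong p (s + 4)
      (∑ k ∈ Finset.range (m + 1),
        (6 * k + 1) * poch (1 / 3) k ^ 6 / (k.factorial : ℚ) ^ 6)
      (poch (2 / 3) ((p ^ s - 1) / 3) ^ 3 / poch 1 ((p ^ s - 1) / 3) ^ 3 *
        ((p : ℚ) ^ s + (p : ℚ) ^ (3 * s) *
          ∑ j ∈ Finset.Icc 1 ((p ^ s - 1) / 3),
            (1 / (3 * (j : ℚ) - 1) ^ 2 - 1 / (3 * (j : ℚ)) ^ 2))) := by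
  have := Fact.mk hp
  obtain ⟨n, hn⟩ : ∃ n, (p ^ s - 1) / 3 = n := ⟨_, rfl⟩
  have hq : p ^ s = 3 * n + 1 := by omega
  have hq' : (p : ℚ) ^ s = 3 * n + 1 := mod_cast hq
  have heven : Even n := by
    have h := hodd.pow (n := s)
    rw [hq] at h
    grind
  have hsum : ∑ k ∈ range (m + 1), (6 * k + 1) * poch (1 / 3) k ^ 6 / (k.factorial : ℚ) ^ 6 =
      ∑ k ∈ range (m + 1), wzTerm m k := by
    simp only [sum_range_wzTerm, poch_one, div_pow, mul_div_assoc]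
  have hfactor (A S q : ℚ) : A * (q + q ^ 3 * S) = q * A * (1 + q ^ 2 * S) := by ring
  rw [hn, hsum, pow_mul', hq', ← div_pow, hfactor, sq_mul_sum_Icc_eq_secondOrderCorrection]
  apply pcong_of_sub_mem_padicBall
  obtain rfl | rfl : m = n ∨ m = 3 * n := by omega
  · exact sum_wzTerm_short hs hq
  · exact sum_wzTerm_long heven hs hq
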